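/- arXiv:1909.02590 — 3 statements merged into one kernel-verified Lean document; each statement's English description precedes it below -/
import Mathlib

section
/- Let $k, N \geq 2$ be integers and let $\epsilon > 0$. Then there exists a $k$-uniform hypergraph $\mathcal{H} = (V, \mathcal{E})$ (with $V$ finite and nonempty) with girth greater than $N$ and independence number less than $\epsilon |V|$. -/
/-!
The proof is the Erdős–Hajnal deletion method. Take `m = C * n` independent uniformly random
`k`-tuples of vertices `f 0, …, f (m - 1)`.

* A short circuit prescribes the values of the tuples at `2 * s` distinct places, while there are at
  most `(m * n * k * k) ^ s` ways of choosing its edge indices, vertices and places. As `m` is linear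
  in `n`, the expected number of circuits of length at most `N` is at most a constant `K`
  independent of `n` (`sum_badCount_le`). A tuple with a repeated entry counts as a circuit of
  length one, so that these are covered as well.
* For a set `S` of at least `ε * n` vertices, the number `Y` of tuples lying inside `S` satisfies
  `𝔼 (1/2) ^ Y ≤ (1 - ε ^ k / 2) ^ m` (`sum_prod_weight_le`). If `C` is large this is at most
  `4 ^ (-n)`, which survives both a union bound over the `2 ^ n` sets `S` and a factor `2 ^ (2 * K)`.

Hence some choice of tuples has at most `2 * K` short circuits and more than `2 * K` tuples inside each
large `S` (`exists_good_tuples`). Deleting one tuple from every short circuit leaves a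
hypergraph with the required properties.
-/

/-- A circuit of length `s` in the hypergraph with hyperedge set `E`: a sequence of
`s` distinct vertices and `s` distinct hyperedges (indexed cyclically by `ZMod s`)
with `vᵢ, vᵢ₊₁ ∈ eᵢ` for each `i`. -/
def HasCircuit {V : Type*} (E : Finset (Finset V)) (s : ℕ) : Prop :=
  ∃ (v : ZMod s → V) (e : ZMod s → Finset V),
    Function.Injective v ∧ Function.Injective e ∧ (∀ i, e i ∈ E) ∧
    (∀ i : ZMod s, v i ∈ e i ∧ v (i + 1) ∈ e i)

open Finset

/-- Candidates for a circuit of length `r + 1` among `m` tuples in `Fin k → Fin n`: the indices of the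
edges, the vertices, and for each edge the two places where it meets its vertices. -/
abbrev CircuitData (m n k r : ℕ) : Type :=
  (ZMod (r + 1) → Fin m) × (ZMod (r + 1) → Fin n) ×
    (ZMod (r + 1) → Fin k) × (ZMod (r + 1) → Fin k)

/-- The candidate `x` is a circuit of the family of tuples `f`. The vertices are not required to be
distinct; instead the two places within each tuple are, so that for `r = 0` this says that a tuple
has a repeated entry. -/
def IsBad {m n k r : ℕ} (f : Fin m → Fin k → Fin n) (x : CircuitData m n k r) : Prop :=
  Function.Injective x.1 ∧ (∀ j, x.2.2.1 j ≠ x.2.2.2 j) ∧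
    ∀ j, f (x.1 j) (x.2.2.1 j) = x.2.1 j ∧ f (x.1 j) (x.2.2.2 j) = x.2.1 (j + 1)

open Classical in
/-- The number of circuits of length at most `N` in the family of tuples `f`. -/
noncomputable def badCount {m n k : ℕ} (N : ℕ) (f : Fin m → Fin k → Fin n) : ℕ :=
  ∑ r ∈ range N, #{x : CircuitData m n k r | IsBad f x}

open Classical in
/-- Prescribing the values of `f` at `|T|` distinct places has probability at most
`n ^ (-|T|)`: overwriting these values arbitrarily recovers distinct families. -/
lemma card_prescribed_le {m n k : ℕ} {T : Type*} [Fintype T] (p : T → Fin m × Fin k)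
    (hp : Function.Injective p) (g : T → Fin n) :
    #{f : Fin m → Fin k → Fin n | ∀ t, f (p t).1 (p t).2 = g t} * n ^ Fintype.card T
      ≤ (n ^ k) ^ m := by
  have h := Fintype.card_le_of_injective
    (fun y : {f : Fin m → Fin k → Fin n // ∀ t, f (p t).1 (p t).2 = g t} × (T → Fin n) =>
      fun (i : Fin m) (a : Fin k) => Function.extend p y.2 (fun z => y.1.1 z.1 z.2) (i, a)) ?_
  · simpa [Fintype.card_subtype] using h
  · rintro ⟨⟨f, hf⟩, u⟩ ⟨⟨f', hf'⟩, u'⟩ h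
    have h' : ∀ z, Function.extend p u (fun z => f z.1 z.2) z
        = Function.extend p u' (fun z => f' z.1 z.2) z := fun z => congrFun (congrFun h z.1) z.2
    have hu : u = u' := by
      funext t
      simpa [hp.extend_apply] using h' (p t)
    have hff : f = f' := by
      funext i a
      by_cases hz : ∃ t, p t = (i, a)
      · obtain ⟨t, ht⟩ := hz
        have h1 := hf t
        have h2 := hf' t
        rw [ht] at h1 h2
        exact h1.trans h2.symm
      · simpa [Function.extend_apply' _ _ _ hz] using h' (i, a)
    subst hu hff
    rfl

open Classical in
lemma card_isBad_le {m n k r : ℕ} (x : CircuitData m n k r) :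
    #{f : Fin m → Fin k → Fin n | IsBad f x} * n ^ (2 * (r + 1)) ≤ (n ^ k) ^ m := by
  obtain ⟨i, v, a, b⟩ := x
  by_cases h : Function.Injective i ∧ ∀ j, a j ≠ b j
  · obtain ⟨hi, hab⟩ := h
    have key := card_prescribed_le (n := n)
      (Sum.elim (fun j => (i j, a j)) (fun j => (i j, b j)))
      (by
        rintro (j | j) (j' | j') h
        · exact congrArg Sum.inl (hi (Prod.ext_iff.1 h).1)
        · have h1 : j = j' := hi (Prod.ext_iff.1 h).1
          subst h1
          exact absurd (Prod.ext_iff.1 h).2 (hab j)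
        · have h1 : j = j' := hi (Prod.ext_iff.1 h).1
          subst h1
          exact absurd (Prod.ext_iff.1 h).2.symm (hab j)
        · exact congrArg Sum.inr (hi (Prod.ext_iff.1 h).1))
      (Sum.elim v (fun j => v (j + 1)))
    rw [Fintype.card_sum, ZMod.card, ← two_mul] at key
    refine le_trans (Nat.mul_le_mul_right _ (card_le_card ?_)) key
    intro f hf
    obtain ⟨-, -, hf⟩ := (mem_filter.1 hf).2
    refine mem_filter.2 ⟨mem_univ _, ?_⟩
    rintro (j | j)
    · exact (hf j).1
    · exact (hf j).2
  · have : #{f : Fin m → Fin k → Fin n | IsBad f (i, v, a, b)} = 0 := by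
      rw [card_eq_zero, filter_eq_empty_iff]
      exact fun f _ hf => h ⟨hf.1, hf.2.1⟩
    simp [this]

/-- The expected number of short circuits is bounded independently of `n`. -/
lemma sum_badCount_le (n k C N : ℕ) (hn : 0 < n) :
    ∑ f : Fin (C * n) → Fin k → Fin n, badCount N f
      ≤ (∑ r ∈ range N, (C * k ^ 2) ^ (r + 1)) * (n ^ k) ^ (C * n) := by
  classical
  unfold badCount
  rw [sum_comm, sum_mul]
  refine sum_le_sum fun r _ => ?_
  have hcomm : ∑ f : Fin (C * n) → Fin k → Fin n, #{x : CircuitData (C * n) n k r | IsBad f x}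
      = ∑ x : CircuitData (C * n) n k r, #{f : Fin (C * n) → Fin k → Fin n | IsBad f x} := by
    simp only [card_filter]
    exact sum_comm
  rw [hcomm]
  refine Nat.le_of_mul_le_mul_right (c := n ^ (2 * (r + 1))) ?_ (by positivity)
  rw [sum_mul]
  refine (sum_le_card_nsmul _ _ _ fun x _ => card_isBad_le x).trans (le_of_eq ?_)
  simp only [card_univ, Fintype.card_prod, Fintype.card_fun, ZMod.card, Fintype.card_fin,
    smul_eq_mul, pow_mul, mul_pow]
  ring

open Classical in
/-- The expectation of `(1/2) ^ Y`, where `Y` is the number of tuples inside the large set `S`. -/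
lemma sum_prod_weight_le {n k m : ℕ} {ε : ℝ} (hε : 0 < ε) (S : Finset (Fin n))
    (hS : ε * n ≤ #S) :
    ∑ f : Fin m → Fin k → Fin n, ∏ i, (if ∀ a, f i a ∈ S then (1 / 2 : ℝ) else 1)
      ≤ ((n : ℝ) ^ k) ^ m * (1 - ε ^ k / 2) ^ m := by
  rw [← Fintype.sum_pow (fun g : Fin k → Fin n => if ∀ a, g a ∈ S then (1 / 2 : ℝ) else 1) m,
    ← mul_pow]
  refine pow_le_pow_left₀ (sum_nonneg fun g _ => by split_ifs <;> norm_num) ?_ m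
  have hcard : #{g : Fin k → Fin n | ∀ a, g a ∈ S} = #S ^ k := by
    have : ({g : Fin k → Fin n | ∀ a, g a ∈ S} : Finset _) = Fintype.piFinset fun _ => S := by
      ext g
      simp [Fintype.mem_piFinset]
    rw [this, Fintype.card_piFinset_const]
  have hsum : ∑ g : Fin k → Fin n, (if ∀ a, g a ∈ S then (1 / 2 : ℝ) else 1)
      = (n : ℝ) ^ k - (#S : ℝ) ^ k / 2 := by
    have h1 : ∀ g : Fin k → Fin n, (if ∀ a, g a ∈ S then (1 / 2 : ℝ) else 1)
        = 1 - (1 / 2) * (if ∀ a, g a ∈ S then 1 else 0) := by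
      intro g
      split_ifs <;> norm_num
    rw [sum_congr rfl fun g _ => h1 g, sum_sub_distrib, ← mul_sum, sum_boole, hcard]
    simp
    ring
  have h2 : (ε * n) ^ k ≤ (#S : ℝ) ^ k := pow_le_pow_left₀ (by positivity) hS k
  rw [mul_pow] at h2
  rw [hsum]
  linarith

open Classical in
/-- Some family of tuples has few short circuits, and more tuples than that inside every large
set of vertices. -/
lemma exists_good_tuples (k N : ℕ) (ε : ℝ) (hε : 0 < ε) (hε1 : ε ≤ 1) :
    ∃ n m : ℕ, 0 < n ∧ ∃ f : Fin m → Fin k → Fin n, ∀ S : Finset (Fin n), ε * n ≤ #S →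
      badCount N f < #{i | ∀ a, f i a ∈ S} := by
  have hεk : 0 < ε ^ k := by positivity
  have hεk1 : ε ^ k ≤ 1 := pow_le_one₀ hε.le hε1
  obtain ⟨C, hC⟩ := exists_pow_lt_of_lt_one (show (0 : ℝ) < 1 / 4 by norm_num)
    (show 1 - ε ^ k / 2 < 1 by linarith)
  have hq : 0 ≤ 1 - ε ^ k / 2 := by linarith
  set K : ℕ := ∑ r ∈ range N, (C * k ^ 2) ^ (r + 1) with hK
  -- This `n` makes `2 ^ (2 * K) * 2 ^ n * 4 ^ (-n) = 1 / 4`.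
  set n : ℕ := 2 * K + 2 with hn
  have hn0 : 0 < n := by omega
  refine ⟨n, C * n, hn0, ?_⟩
  by_contra! hcon
  -- Markov's inequality in exponential form: every family is charged at least `1`.
  have hone : ∀ f : Fin (C * n) → Fin k → Fin n, (1 : ℝ) ≤ badCount N f / (2 * K + 1) +
      ∑ S : Finset (Fin n) with ε * n ≤ #S,
        2 ^ (2 * K) * ∏ i, (if ∀ a, f i a ∈ S then (1 / 2 : ℝ) else 1) := by
    intro f
    have hnn : ∀ S : Finset (Fin n),
        0 ≤ 2 ^ (2 * K) * ∏ i, (if ∀ a, f i a ∈ S then (1 / 2 : ℝ) else 1) := fun S =>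
      mul_nonneg (by positivity) (prod_nonneg fun i _ => by split_ifs <;> norm_num)
    by_cases hX : 2 * K + 1 ≤ badCount N f
    · refine le_add_of_le_of_nonneg ?_ (sum_nonneg fun S _ => hnn S)
      rw [le_div_iff₀ (by positivity), one_mul]
      exact_mod_cast hX
    · obtain ⟨S, hS, hY⟩ := hcon f
      refine le_add_of_nonneg_of_le (by positivity) ?_
      refine le_trans ?_ (single_le_sum (fun S _ => hnn S) (mem_filter.2 ⟨mem_univ S, hS⟩))
      rw [prod_ite, prod_const, prod_const_one, mul_one]
      have h1 : (1 / 2 : ℝ) ^ (2 * K) ≤ (1 / 2) ^ #{i | ∀ a, f i a ∈ S} :=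
        pow_le_pow_of_le_one (by norm_num) (by norm_num) (by omega)
      calc (1 : ℝ) = 2 ^ (2 * K) * (1 / 2) ^ (2 * K) := by rw [← mul_pow]; norm_num
        _ ≤ _ := mul_le_mul_of_nonneg_left h1 (by positivity)
  have hsum := sum_le_sum fun f (_ : f ∈ univ) => hone f
  rw [sum_add_distrib, ← sum_div, sum_comm] at hsum
  simp only [← mul_sum] at hsum
  have hΩ : ∑ f : Fin (C * n) → Fin k → Fin n, (1 : ℝ) = ((n : ℝ) ^ k) ^ (C * n) := by simp
  have hΩ0 : 0 < ((n : ℝ) ^ k) ^ (C * n) := by positivity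
  rw [hΩ] at hsum
  have hA : (∑ f : Fin (C * n) → Fin k → Fin n, (badCount N f : ℝ)) / (2 * K + 1)
      ≤ ((n : ℝ) ^ k) ^ (C * n) * (1 / 2) := by
    have h : (∑ f : Fin (C * n) → Fin k → Fin n, (badCount N f : ℝ))
        ≤ K * ((n : ℝ) ^ k) ^ (C * n) := by exact_mod_cast sum_badCount_le n k C N hn0
    rw [div_le_iff₀ (by positivity)]
    nlinarith
  have hB : 2 ^ (2 * K) * ∑ S : Finset (Fin n) with ε * n ≤ #S,
      ∑ f : Fin (C * n) → Fin k → Fin n, ∏ i, (if ∀ a, f i a ∈ S then (1 / 2 : ℝ) else 1)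
      ≤ ((n : ℝ) ^ k) ^ (C * n) * (1 / 4) := by
    have h1 : ∀ S ∈ ({S : Finset (Fin n) | ε * n ≤ #S} : Finset _),
        ∑ f : Fin (C * n) → Fin k → Fin n, ∏ i, (if ∀ a, f i a ∈ S then (1 / 2 : ℝ) else 1)
        ≤ ((n : ℝ) ^ k) ^ (C * n) * (1 / 4) ^ n := by
      intro S hS
      refine (sum_prod_weight_le hε S (mem_filter.1 hS).2).trans ?_
      rw [pow_mul (1 - ε ^ k / 2)]
      exact mul_le_mul_of_nonneg_left
        (pow_le_pow_left₀ (pow_nonneg hq C) hC.le n) hΩ0.le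
    have h2 := sum_le_card_nsmul _ _ _ h1
    have h3 : (#({S : Finset (Fin n) | ε * n ≤ #S} : Finset _) : ℝ) ≤ 2 ^ n := by
      have := card_le_univ ({S : Finset (Fin n) | ε * n ≤ #S} : Finset _)
      rw [Fintype.card_finset, Fintype.card_fin] at this
      exact_mod_cast this
    rw [nsmul_eq_mul] at h2
    calc _ ≤ 2 ^ (2 * K) * (2 ^ n * (((n : ℝ) ^ k) ^ (C * n) * (1 / 4) ^ n)) := by
          refine mul_le_mul_of_nonneg_left (h2.trans ?_) (by positivity)
          exact mul_le_mul_of_nonneg_right h3 (by positivity)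
      _ = ((n : ℝ) ^ k) ^ (C * n) * (2 ^ (2 * K) * (2 * (1 / 4)) ^ n) := by
          rw [mul_pow]; ring
      _ = ((n : ℝ) ^ k) ^ (C * n) * ((2 * (1 / 2)) ^ (2 * K) * (1 / 4)) := by
          congr 1
          rw [show (2 * (1 / 4) : ℝ) = 1 / 2 by norm_num,
            show (1 / 2 : ℝ) ^ n = (1 / 2) ^ (2 * K) * (1 / 4) by rw [hn, pow_add]; norm_num,
            mul_pow]
          ring
      _ = _ := by norm_num
  linarith

/-- For all `k, N ≥ 2` and `ε > 0` there is a `k`-uniform hypergraph with girth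
greater than `N` and independence number less than `ε` times the number of vertices. -/
theorem exists_high_girth_low_independence_hypergraph
    (k N : ℕ) (hk : 2 ≤ k) (hN : 2 ≤ N) (ε : ℝ) (hε : 0 < ε) :
    ∃ n : ℕ, 0 < n ∧ ∃ E : Finset (Finset (Fin n)),
      (∀ e ∈ E, e.card = k) ∧
      (∀ s : ℕ, 2 ≤ s → s ≤ N → ¬ HasCircuit E s) ∧
      (∀ S : Finset (Fin n), (∀ e ∈ E, ¬ e ⊆ S) → (S.card : ℝ) < ε * n) := by
  classical
  by_cases hε1 : 1 < ε
  · refine ⟨1, one_pos, ∅, by simp, ?_, fun S _ => ?_⟩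
    · rintro s - - ⟨v, e, -, -, he, -⟩
      simpa using he 0
    · have h : (#S : ℝ) ≤ 1 := by
        exact_mod_cast (card_le_univ S).trans (by simp)
      push_cast
      linarith
  obtain ⟨n, m, hn, f, hf⟩ := exists_good_tuples k N ε hε (not_lt.1 hε1)
  -- The first edge of every short circuit is deleted.
  set D : Finset (Fin m) := (range N).biUnion fun r =>
    ({x : CircuitData m n k r | IsBad f x} : Finset _).image fun x => x.1 0 with hD
  have hDcard : #D ≤ badCount N f :=
    card_biUnion_le.trans (sum_le_sum fun r _ => card_image_le)
  have hDmem : ∀ r < N, ∀ x : CircuitData m n k r, IsBad f x → x.1 0 ∈ D := fun r hr x hx =>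
    mem_biUnion.2 ⟨r, mem_range.2 hr, mem_image.2 ⟨x, mem_filter.2 ⟨mem_univ _, hx⟩, rfl⟩⟩
  refine ⟨n, hn, (univ \ D).image fun i => univ.image (f i), ?_, ?_, ?_⟩
  · intro e he
    obtain ⟨i, hi, rfl⟩ := mem_image.1 he
    rw [card_image_of_injective, card_univ, Fintype.card_fin]
    intro a b hab
    by_contra hne
    refine (mem_sdiff.1 hi).2 (hDmem 0 (by omega)
      (fun _ => i, fun _ => f i a, fun _ => a, fun _ => b) ⟨?_, fun _ => hne, fun _ => ⟨rfl, hab.symm⟩⟩)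
    intro x y _
    exact Subsingleton.elim (α := Fin 1) x y
  · rintro s hs hsN ⟨v, e, hv, he, heE, hve⟩
    obtain ⟨r, rfl⟩ : ∃ r, s = r + 1 := ⟨s - 1, by omega⟩
    choose i hi hie using fun j => mem_image.1 (heE j)
    have hve' : ∀ j, ∃ a b, f (i j) a = v j ∧ f (i j) b = v (j + 1) := by
      intro j
      have h := hve j
      rw [← hie j] at h
      obtain ⟨a, -, ha⟩ := mem_image.1 h.1
      obtain ⟨b, -, hb⟩ := mem_image.1 h.2
      exact ⟨a, b, ha, hb⟩
    choose a b hab using hve'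
    have : Fact (1 < r + 1) := ⟨by omega⟩
    refine (mem_sdiff.1 (hi 0)).2 (hDmem r (by omega) (i, v, a, b) ⟨?_, ?_, hab⟩)
    · intro x y hxy
      exact he (by rw [← hie x, ← hie y, show i x = i y from hxy])
    · intro j hj
      have h1 : v j = v (j + 1) := by
        rw [← (hab j).1, ← (hab j).2]
        exact congrArg _ hj
      have h2 := hv h1
      simp at h2
  · intro S hS
    by_contra hlt
    obtain ⟨i, hi, hiD⟩ := exists_mem_notMem_of_card_lt_card (hDcard.trans_lt (hf S (not_lt.1 hlt)))
    refine hS _ (mem_image.2 ⟨i, mem_sdiff.2 ⟨mem_univ _, hiD⟩, rfl⟩) ?_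
    intro x hx
    obtain ⟨a, -, rfl⟩ := mem_image.1 hx
    exact (mem_filter.1 hi).2 a
end

section
/- Let $N \geq 2$ be an integer and let $\mathcal{H} = (V, \mathcal{E})$ be a hypergraph of girth greater than $N$. Let $G$ be a graph with vertex set $V$ such that for distinct $u, v \in V$, $u$ is adjacent to $v$ in $G$ only if some hyperedge of $\mathcal{E}$ contains both $u$ and $v$. Suppose $G$ contains a cycle $C = v_1 v_2 \ldots v_k v_1$ of length $k \leq N$, and let $e \in \mathcal{E}$ be a hyperedge containing both endpoints of some edge of $C$. Then $e$ contains every vertex of $C$. -/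
/-- A path of distinct vertices `w 0, …, w m` with pairwise distinct connecting hyperedges
`f 0, …, f (m - 1)` is closed up to a circuit by a further hyperedge `e` through both ends. -/
theorem hasCircuit_of_path {V : Type*} {E : Finset (Finset V)} {e : Finset V} (he : e ∈ E)
    {m : ℕ} {w : ℕ → V} {f : ℕ → Finset V}
    (hw : ∀ a b, a ≤ m → b ≤ m → w a = w b → a = b)
    (hf : ∀ a b, a < m → b < m → f a = f b → a = b)
    (hfE : ∀ a, a < m → f a ∈ E) (hfe : ∀ a, a < m → f a ≠ e)
    (hl : ∀ a, a < m → w a ∈ f a) (hr : ∀ a, a < m → w (a + 1) ∈ f a)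
    (h0 : w 0 ∈ e) (hm : w m ∈ e) : HasCircuit E (m + 1) := by
  -- `ZMod (m + 1)` is by definition `Fin (m + 1)`.
  refine ⟨fun i : Fin (m + 1) => w i.val,
    fun i : Fin (m + 1) => if i.val < m then f i.val else e, ?_, ?_, ?_, ?_⟩
  · intro (a : Fin (m + 1)) (b : Fin (m + 1)) hab
    exact Fin.ext (hw _ _ (by omega) (by omega) hab)
  · intro (a : Fin (m + 1)) (b : Fin (m + 1)) hab
    have ha := a.isLt
    have hb := b.isLt
    apply Fin.ext
    dsimp only at hab
    split_ifs at hab with h1 h2 h2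
    · exact hf _ _ h1 h2 hab
    · exact absurd hab (hfe _ h1)
    · exact absurd hab.symm (hfe _ h2)
    · omega
  · intro (a : Fin (m + 1))
    dsimp only
    split_ifs with h1
    · exact hfE _ h1
    · exact he
  · intro (a : Fin (m + 1))
    suffices key : ∀ n, n = (if a = Fin.last m then 0 else a.val + 1) →
        w a.val ∈ (if a.val < m then f a.val else e) ∧
          w n ∈ (if a.val < m then f a.val else e) from key _ (Fin.val_add_one a)
    rintro _ rfl
    have ha := a.isLt
    split_ifs with h1 h2 h2
    · simp [h2] at h1
    · exact ⟨hl _ h1, hr _ h1⟩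
    · exact ⟨by simpa [h2] using hm, h0⟩
    · exact absurd (Fin.ext (by simp only [Fin.val_last]; omega)) h2

/-- In a hypergraph of girth greater than `N`, a hyperedge through both ends of a path on at most
`N` vertices contains the whole path. -/
theorem path_subset_hyperedge {V : Type*} {N : ℕ} (hN : 2 ≤ N) {E : Finset (Finset V)}
    (hgirth : ∀ s : ℕ, 2 ≤ s → s ≤ N → ¬ HasCircuit E s) {e : Finset V} (he : e ∈ E)
    (m : ℕ) : ∀ (w : ℕ → V), m + 1 ≤ N →
    (∀ a b, a ≤ m → b ≤ m → w a = w b → a = b) →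
    (∀ a, a < m → ∃ f ∈ E, w a ∈ f ∧ w (a + 1) ∈ f) →
    w 0 ∈ e → w m ∈ e → ∀ t, t ≤ m → w t ∈ e := by
  induction m using Nat.strong_induction_on with
  | _ m ih =>
  intro w hmN hw hadj h0 hm
  by_cases hint : ∃ j, 0 < j ∧ j < m ∧ w j ∈ e
  · obtain ⟨j, hj0, hjm, hj⟩ := hint
    intro t ht
    rcases le_total t j with htj | htj
    · exact ih j hjm w (by omega) (fun a b ha hb => hw a b (by omega) (by omega))
        (fun a ha => hadj a (by omega)) h0 hj t htj
    · have := ih (m - j) (by omega) (fun s => w (j + s)) (by omega)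
        (fun a b ha hb hab => by have := hw _ _ (by omega) (by omega) hab; omega)
        (fun a ha => hadj (j + a) (by omega)) hj
        (by simpa [Nat.add_sub_cancel' hjm.le] using hm) (t - j) (by omega)
      simpa [Nat.add_sub_cancel' htj] using this
  push Not at hint
  -- Without interior vertices in `e`, a path with at least two edges is impossible.
  by_cases hm2 : m ≤ 1
  · intro t ht
    obtain rfl | rfl : t = 0 ∨ t = m := by omega
    · exact h0
    · exact hm
  exfalso
  choose! f hfE hl hr using hadj
  have hfe : ∀ a, a < m → f a ≠ e := by
    rintro a ha rfl
    rcases Nat.eq_zero_or_pos a with rfl | hpos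
    · exact hint 1 one_pos (by omega) (hr 0 ha)
    · exact hint a hpos ha (hl a ha)
  by_cases hrep : ∃ i j, i < j ∧ j < m ∧ f i = f j
  · obtain ⟨i, j, hij, hjm, hfij⟩ := hrep
    have hlj : w (j + 1) ∈ f i := hfij ▸ hr j hjm
    have key := ih (m - (j - i)) (by omega)
      (fun t => if t ≤ i then w t else w (t + (j - i))) (by omega)
      (by
        intro a b ha hb hab
        split_ifs at hab <;> have := hw _ _ (by omega) (by omega) hab <;> omega)
      (by
        intro a ha
        rcases lt_trichotomy a i with h | rfl | h
        · rw [if_pos h.le, if_pos (by omega)]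
          exact ⟨f a, hfE a (by omega), hl a (by omega), hr a (by omega)⟩
        · rw [if_pos le_rfl, if_neg (by omega), show a + 1 + (j - a) = j + 1 by omega]
          exact ⟨f a, hfE a (by omega), hl a (by omega), hlj⟩
        · rw [if_neg (by omega), if_neg (by omega),
            show a + 1 + (j - i) = a + (j - i) + 1 by omega]
          exact ⟨f (a + (j - i)), hfE _ (by omega), hl _ (by omega), hr _ (by omega)⟩)
      (by simpa using h0)
      (by
        rw [if_neg (by omega), Nat.sub_add_cancel (by omega)]
        exact hm)
    have hi : w i ∈ e := by simpa using key i (by omega)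
    have hj : w (j + 1) ∈ e := by
      have := key (i + 1) (by omega)
      rwa [if_neg (by omega), show i + 1 + (j - i) = j + 1 by omega] at this
    have hi0 : i = 0 := by
      by_contra h
      exact hint i (by omega) (by omega) hi
    have hjm' : j + 1 = m := by
      by_contra h
      exact hint (j + 1) (by omega) (by omega) hj
    -- The two-edge circuit is the path `w 0, w m` with the single hyperedge `f i`, closed by `e`.
    refine hgirth 2 le_rfl hN (hasCircuit_of_path he (m := 1)
      (w := fun t => if t = 0 then w 0 else w m) (f := fun _ => f i) ?_ ?_ ?_ ?_ ?_ ?_ ?_ ?_)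
    · intro a b ha hb hab
      split_ifs at hab
      · omega
      · have := hw _ _ (by omega) le_rfl hab
        omega
      · have := hw _ _ le_rfl (by omega) hab
        omega
      · omega
    · intro a b ha hb _
      omega
    · exact fun _ _ => hfE i (by omega)
    · exact fun _ _ => hfe i (by omega)
    · intro a ha
      rw [if_pos (by omega)]
      simpa [hi0] using hl 0 (by omega)
    · intro a ha
      rw [if_neg (by omega), ← hjm']
      exact hlj
    · simpa using h0
    · simpa using hm
  · push Not at hrep
    refine hgirth (m + 1) (by omega) hmN
      (hasCircuit_of_path he hw ?_ hfE hfe hl hr h0 hm)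
    intro a b ha hb hab
    rcases lt_trichotomy a b with h | h | h
    · exact absurd hab (hrep a b h hb)
    · exact h
    · exact absurd hab.symm (hrep b a h ha)

/-- If a hypergraph has girth greater than `N ≥ 2`, `G` is a graph on its vertices
whose edges lie inside hyperedges, and `C` is a cycle in `G` of length `k ≤ N` (given by
`k` distinct vertices indexed cyclically by `ZMod k`, consecutive ones adjacent), then any
hyperedge containing both endpoints of some edge of `C` contains every vertex of `C`. -/
theorem hyperedge_contains_short_cycle
    {V : Type*} [Fintype V] (N : ℕ) (hN : 2 ≤ N)
    (E : Finset (Finset V))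
    (hgirth : ∀ s : ℕ, 2 ≤ s → s ≤ N → ¬ HasCircuit E s)
    (G : SimpleGraph V)
    (hGE : ∀ u v : V, G.Adj u v → ∃ e ∈ E, u ∈ e ∧ v ∈ e)
    (k : ℕ) (hkN : k ≤ N)
    (v : ZMod k → V) (hv : Function.Injective v)
    (hcyc : ∀ i : ZMod k, G.Adj (v i) (v (i + 1)))
    (e : Finset V) (he : e ∈ E)
    (i₀ : ZMod k) (h₁ : v i₀ ∈ e) (h₂ : v (i₀ + 1) ∈ e) :
    ∀ i : ZMod k, v i ∈ e := by
  -- `ZMod 0` is infinite, so it does not inject into the finite vertex set.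
  have hk : NeZero k := by
    refine ⟨?_⟩
    rintro rfl
    have : Finite (ZMod 0) := Finite.of_injective v hv
    exact not_finite (ZMod 0)
  have hpos : 0 < k := Nat.pos_of_ne_zero hk.ne
  intro i
  have key := path_subset_hyperedge hN hgirth he (k - 1)
    (fun t => v (i₀ + 1 + (t : ZMod k))) (by omega)
    (by
      intro a b ha hb hab
      have h := add_left_cancel (hv hab)
      rw [ZMod.natCast_eq_natCast_iff'] at h
      rwa [Nat.mod_eq_of_lt (by omega), Nat.mod_eq_of_lt (by omega)] at h)
    (by
      intro a _
      have h := hGE _ _ (hcyc (i₀ + 1 + (a : ZMod k)))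
      simpa [add_assoc] using h)
    (by simpa using h₂)
    (by simpa [Nat.cast_sub (show 1 ≤ k from hpos)] using h₁)
    (i - (i₀ + 1)).val (by have := ZMod.val_lt (i - (i₀ + 1)); omega)
  simpa using key
end

section
/- Let $G$ be a complete bipartite graph with finite partite sets $A$ and $B$, and consider any colouring of the edges of $G$ in two colours. Then there exist subsets $A' \subseteq A$ and $B' \subseteq B$ with $|A'| \geq |A|/2$ and $|B'| \geq |B|/2^{|A|}$ such that all edges between $A'$ and $B'$ receive the same colour. -/
/-!
Each vertex `b` of `B` determines a colour pattern `fun a => c a b` on `A`, and there are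
`2 ^ |A|` patterns. By pigeonhole some pattern `f` is shared by at least `|B| / 2 ^ |A|` vertices,
which form `B'`. By pigeonhole again, `f` takes some colour `i` on at least half of `A`, and these
vertices form `A'`.
-/

/-- Focussing lemma: in any 2-colouring of the edges of the complete bipartite graph with
parts `A` and `B` there are `A' ⊆ A`, `B' ⊆ B` with `|A'| ≥ |A|/2`, `|B'| ≥ |B|/2^|A|`
such that all edges between `A'` and `B'` have the same colour. -/
theorem focussing_lemma {A B : Type} [Fintype A] [Fintype B] (c : A → B → Fin 2) :
    ∃ (A' : Finset A) (B' : Finset B) (i : Fin 2),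
      (Fintype.card A : ℝ) / 2 ≤ A'.card ∧
      (Fintype.card B : ℝ) / 2 ^ (Fintype.card A) ≤ B'.card ∧
      ∀ a ∈ A', ∀ b ∈ B', c a b = i := by
  classical
  obtain ⟨f, hf⟩ := Fintype.exists_le_card_fiber_of_nsmul_le_card
    (fun (b : B) (a : A) => c a b) (b := (Fintype.card B : ℝ) / 2 ^ Fintype.card A) (by
      rw [Fintype.card_fun, Fintype.card_fin, nsmul_eq_mul]
      push_cast
      exact (mul_div_cancel₀ _ (by positivity)).le)
  obtain ⟨i, hi⟩ := Fintype.exists_le_card_fiber_of_nsmul_le_card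
    f (b := (Fintype.card A : ℝ) / 2) (by
      rw [Fintype.card_fin, nsmul_eq_mul]
      push_cast
      linarith)
  refine ⟨_, _, i, hi, hf, fun a ha b hb => ?_⟩
  rw [Finset.mem_filter_univ] at ha hb
  exact (congrFun hb a).trans ha
end
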